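/- In the binomial model, a set S ⊆ 𝕏 is an equilibrium if and only if S = (0,y] ∩ 𝕏 for some y ∈ (L·K, U·K] ∩ 𝕏, where L := (1 − α₁)/(u − α₁), U := (1 − (1−p)/(1+β) − p·α') / (1 − (1−p)/(u(1+β)) − p·α'), α₁ := E^1[1/(1+βξ)] and α' := E^1[1/(1+β(ξ+1))]. Consequently, S* := (0, y*] ∩ 𝕏 with y* := min{z ∈ 𝕏 : z > L·K} is the optimal equilibrium: S* ∈ ℰ and V(x,S*) ≥ V(x,S) for every S ∈ ℰ and every x ∈ 𝕏. -/

import Mathlib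

/-!
Everything is reduced to two deterministic recursions. For a chain with two-point transitions, the
Markov property turns the objective value into the series
`J(x, ρ(x,S)) = ∑ₙ δ(n+1) 𝔼^x[f(X_{n+1}); ρ(x,S) = n+1]`, whose terms obey first-step analysis
(`hasSum_valJ`). Above the threshold of `S = (0,y]` these terms, like those defining `α₁` and `α'`,
are first-passage probabilities of a walk on `ℕ` (`hitMean_level`), so `J(uⁿ y) = αₙ (K - y)⁺`,
where `αₙ = E^n[1/(1+βξ)]`.

The single property of hyperbolic discounting in use is `δ(s + t) ≥ δ(s) δ(t)`. As the walk is
skip-free downwards, it gives `αₙ₊ₘ ≥ αₙ αₘ` and `E^2[δ(ξ+1)] ≥ α' α₁` (`levelDisc_mul_le`).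

* Every equilibrium is an interval (`IsBinEq.exists_eq`): it cannot miss `(0,K)`, cannot contain a
  point `≥ K` (stopping there pays nothing, while a run of down-steps reaches a positive payoff),
  and below its top the submartingale property makes stopping at least as good as waiting
  (`binJ_below`).
* For an interval with `y < K`, the condition at `y` is `y ≤ U K`, and the condition at `u y` is
  `y > L K`. The latter propagates to `uⁿ y` because `αₙ ≥ α₁ⁿ` (`isBinEq_iff`).
* `u L ≤ U` follows from `α₁ = (1-p)/(1+β) + p E^2[δ(ξ+1)] ≥ (1-p)/(1+β) + p α' α₁`, so `(L K, U K]`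
  contains `y*` (`mul_lower_le_upper`).
* For `y* ≤ y` and `x = uⁿ y`, `y = uᵐ y*`, one has
  `J(x, S*) = αₙ₊ₘ (K - y*)⁺ ≥ αₙ αₘ (K - y*)⁺ = αₙ J(y, S*) ≥ αₙ (K - y)⁺ = J(x, S)`
  when `m, n ≥ 1` (`value_mono`).
-/

open MeasureTheory ProbabilityTheory Set Filter Topology
open scoped ENNReal ENat

noncomputable section

/-- The σ-algebra generated by the first `n+1` coordinates of the path space:
the natural filtration of the coordinate process at time `n`. -/
def pathSigma (𝕏 : Type*) [m : MeasurableSpace 𝕏] (n : ℕ) : MeasurableSpace (ℕ → 𝕏) :=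
  ⨆ i ∈ Finset.range (n + 1), MeasurableSpace.comap (fun ω : ℕ → 𝕏 => ω i) m

/-- `Pr` is the family of laws of the time-homogeneous Markov chain with one-step
transition kernel `Q`: under `Pr x` the chain starts at `x`, and the Markov property
`Pr^x(X_{n+1} ∈ A | 𝓕_n) = Q(X_n, A)` holds. -/
structure IsMarkovChainLaw {𝕏 : Type*} [MeasurableSpace 𝕏]
    (Pr : Kernel 𝕏 (ℕ → 𝕏)) (Q : Kernel 𝕏 𝕏) : Prop where
  start : ∀ x : 𝕏, Pr x {ω | ω 0 = x} = 1
  markov : ∀ (x : 𝕏) (n : ℕ) (B : Set (ℕ → 𝕏)), MeasurableSet[pathSigma 𝕏 n] B →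
    ∀ A : Set 𝕏, MeasurableSet A →
      Pr x (B ∩ {ω | ω (n + 1) ∈ A}) = ∫⁻ ω in B, Q (ω n) A ∂(Pr x)

/-- The first hitting time `ρ(x,S) = inf {t ≥ 1 : X_t ∈ S}` along the path `ω`
(equal to `⊤` if `S` is never reached at a time `≥ 1`). -/
def hitTime {𝕏 : Type*} (S : Set 𝕏) (ω : ℕ → 𝕏) : ℕ∞ :=
  sInf {n : ℕ∞ | ∃ t : ℕ, n = (t : ℕ∞) ∧ 1 ≤ t ∧ ω t ∈ S}

/-- The discounted payoff `δ(ρ(x,S)) f(X_{ρ(x,S)})` collected along the path `ω`,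
with the convention that it vanishes when `S` is never hit. -/
def stopPayoff {𝕏 : Type*} (δ : ℕ → ℝ) (f : 𝕏 → ℝ) (S : Set 𝕏) (ω : ℕ → 𝕏) : ℝ :=
  if hitTime S ω = ⊤ then 0
  else δ (hitTime S ω).toNat * f (ω (hitTime S ω).toNat)

/-- The objective value `J(x, ρ(x,S)) = 𝔼^x[δ(ρ(x,S)) f(X_{ρ(x,S)})]`. -/
def valJ {𝕏 : Type*} [MeasurableSpace 𝕏] (Pr : Kernel 𝕏 (ℕ → 𝕏)) (δ : ℕ → ℝ) (f : 𝕏 → ℝ)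
    (S : Set 𝕏) (x : 𝕏) : ℝ :=
  ∫ ω, stopPayoff δ f S ω ∂(Pr x)

/-- The operator `Θ(S) = {x ∈ 𝕏 : f(x) ≥ J(x, ρ(x,S))}`. -/
def Θ {𝕏 : Type*} [MeasurableSpace 𝕏] (Pr : Kernel 𝕏 (ℕ → 𝕏)) (δ : ℕ → ℝ) (f : 𝕏 → ℝ)
    (S : Set 𝕏) : Set 𝕏 :=
  {x | valJ Pr δ f S x ≤ f x}

/-- A Borel set `S ⊆ 𝕏` is an equilibrium if `Θ(S) = S`. -/
def IsEquilibrium {𝕏 : Type*} [MeasurableSpace 𝕏] (Pr : Kernel 𝕏 (ℕ → 𝕏)) (δ : ℕ → ℝ)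
    (f : 𝕏 → ℝ) (S : Set 𝕏) : Prop :=
  MeasurableSet S ∧ Θ Pr δ f S = S

/-- The value `V(x,S) = max (f x) (J(x, ρ(x,S)))` associated with an equilibrium `S`. -/
def valV {𝕏 : Type*} [MeasurableSpace 𝕏] (Pr : Kernel 𝕏 (ℕ → 𝕏)) (δ : ℕ → ℝ) (f : 𝕏 → ℝ)
    (S : Set 𝕏) (x : 𝕏) : ℝ :=
  max (f x) (valJ Pr δ f S x)

/-- The state space `𝕏 = {uⁱ : i ∈ ℤ}` of the binomial model. -/
def binGrid (u : ℝ) : Set ℝ := {x | ∃ i : ℤ, x = u ^ i}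

/-- The hyperbolic discount function `δ(t) = 1 / (1 + βt)`. -/
def binDisc (β : ℝ) (t : ℕ) : ℝ := 1 / (1 + β * t)

/-- The payoff function `f(x) = max (K − x) 0`. -/
def binPay (K : ℝ) (x : ℝ) : ℝ := max (K - x) 0

/-- The operator `Θ(S) = {x ∈ 𝕏 : f(x) ≥ J(x, ρ(x,S))}` of the binomial model. -/
def ΘBin (Pr : Kernel ℝ (ℕ → ℝ)) (u β K : ℝ) (S : Set ℝ) : Set ℝ :=
  {x | x ∈ binGrid u ∧ valJ Pr (binDisc β) (binPay K) S x ≤ binPay K x}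

/-- The first hitting time `ξ = inf {t ≥ 0 : Y_t = 0}` of `0` by the random walk path `ω`. -/
def walkHit (ω : ℕ → ℤ) : ℕ∞ :=
  sInf {n : ℕ∞ | ∃ t : ℕ, n = (t : ℕ∞) ∧ ω t = 0}

/-- The discounted quantity `1 / (1 + β(ξ + s))`, equal to `0` on `{ξ = ∞}`. -/
def walkDisc (β : ℝ) (s : ℕ) (ω : ℕ → ℤ) : ℝ :=
  if walkHit ω = ⊤ then 0 else 1 / (1 + β * ((walkHit ω).toNat + s))

/-- `α_n = E^n[1 / (1 + βξ)]`. -/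
def alphaWalk (PrY : Kernel ℤ (ℕ → ℤ)) (β : ℝ) (n : ℤ) : ℝ :=
  ∫ ω, walkDisc β 0 ω ∂(PrY n)

/-- `α' = E^1[1 / (1 + β(ξ + 1))]`. -/
def alphaWalk' (PrY : Kernel ℤ (ℕ → ℤ)) (β : ℝ) : ℝ :=
  ∫ ω, walkDisc β 1 ω ∂(PrY 1)

/-- `L = (1 − α₁)/(u − α₁)`. -/
def binL (PrY : Kernel ℤ (ℕ → ℤ)) (u β : ℝ) : ℝ :=
  (1 - alphaWalk PrY β 1) / (u - alphaWalk PrY β 1)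

/-- `U = (1 − (1−p)/(1+β) − p α') / (1 − (1−p)/(u(1+β)) − p α')`. -/
def binU (PrY : Kernel ℤ (ℕ → ℤ)) (u p β : ℝ) : ℝ :=
  (1 - (1 - p) / (1 + β) - p * alphaWalk' PrY β) /
    (1 - (1 - p) / (u * (1 + β)) - p * alphaWalk' PrY β)

/-- `y* = min {z ∈ 𝕏 : z > L·K}`. -/
def binYstar (PrY : Kernel ℤ (ℕ → ℤ)) (u β K : ℝ) : ℝ :=
  sInf {z : ℝ | z ∈ binGrid u ∧ binL PrY u β * K < z}

/-! ### First-passage values of a two-point Markov chain -/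

/-- One-step expectation `p g(a z) + (1 - p) g(b z)` of a chain moving from `z` to `a z` with
probability `p` and to `b z` otherwise. -/
def stepMean {E : Type*} (p : ℝ) (a b : E → E) (g : E → ℝ) (z : E) : ℝ :=
  p * g (a z) + (1 - p) * g (b z)

/-- `avoidMean p a b S n g z` is `𝔼^z[g(X_{n+1}); X_1, …, X_n ∉ S]`, defined by first-step
analysis. -/
def avoidMean {E : Type*} (p : ℝ) (a b : E → E) (S : Set E) : ℕ → (E → ℝ) → E → ℝ
  | 0, g => stepMean p a b g
  | n + 1, g => stepMean p a b (Sᶜ.indicator (avoidMean p a b S n g))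

/-- `hitMean p a b f S n z` is `𝔼^z[f(X_{n+1}); ρ(z,S) = n + 1]`. -/
def hitMean {E : Type*} (p : ℝ) (a b : E → E) (f : E → ℝ) (S : Set E) (n : ℕ) (z : E) : ℝ :=
  avoidMean p a b S n (S.indicator f) z

lemma hitMean_zero {E : Type*} (p : ℝ) (a b : E → E) (f : E → ℝ) (S : Set E) (z : E) :
    hitMean p a b f S 0 z = p * S.indicator f (a z) + (1 - p) * S.indicator f (b z) := rfl

lemma hitMean_succ {E : Type*} (p : ℝ) (a b : E → E) (f : E → ℝ) (S : Set E) (n : ℕ) (z : E) :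
    hitMean p a b f S (n + 1) z = p * Sᶜ.indicator (hitMean p a b f S n) (a z)
      + (1 - p) * Sᶜ.indicator (hitMean p a b f S n) (b z) := rfl

/-- The recursion of `avoidMean` peels off the first step; it can equally be read as peeling off
the last step, which is the form in which the Markov property delivers it. -/
lemma avoidMean_succ' {E : Type*} (p : ℝ) (a b : E → E) (S : Set E) (n : ℕ) (g : E → ℝ) :
    avoidMean p a b S (n + 1) g = avoidMean p a b S n (Sᶜ.indicator (stepMean p a b g)) := by
  induction n with
  | zero => rfl
  | succ n ih => rw [avoidMean, ih]; rfl

lemma stepMean_nonneg {E : Type*} {p : ℝ} (hp0 : 0 ≤ p) (hp1 : p ≤ 1) (a b : E → E) {g : E → ℝ}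
    (hg : ∀ z, 0 ≤ g z) (z : E) : 0 ≤ stepMean p a b g z :=
  add_nonneg (mul_nonneg hp0 (hg _)) (mul_nonneg (by linarith) (hg _))

lemma avoidMean_nonneg {E : Type*} {p : ℝ} (hp0 : 0 ≤ p) (hp1 : p ≤ 1) (a b : E → E) (S : Set E)
    (n : ℕ) {g : E → ℝ} (hg : ∀ z, 0 ≤ g z) : ∀ z, 0 ≤ avoidMean p a b S n g z := by
  induction n with
  | zero => exact stepMean_nonneg hp0 hp1 a b hg
  | succ n ih =>
    exact stepMean_nonneg hp0 hp1 a b fun z => Set.indicator_nonneg (fun z _ => ih z) z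

lemma hitMean_nonneg {E : Type*} {p : ℝ} (hp0 : 0 ≤ p) (hp1 : p ≤ 1) (a b : E → E) (S : Set E)
    (n : ℕ) {f : E → ℝ} (hf : ∀ z, 0 ≤ f z) (z : E) : 0 ≤ hitMean p a b f S n z :=
  avoidMean_nonneg hp0 hp1 a b S n (fun z => Set.indicator_nonneg (fun z _ => hf z) z) z

/-- Comparison principle: a nonnegative superharmonic function which dominates `f` on `S` dominates
the expected payoff at the hitting time of `S`. It suffices to test all this on a region `R` that
the chain cannot leave without hitting `S`. -/
lemma sum_hitMean_le {E : Type*} {p : ℝ} (hp0 : 0 ≤ p) (hp1 : p ≤ 1) (a b : E → E) (S R : Set E)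
    (f g : E → ℝ) (hS : ∀ z ∈ R, (a z ∈ S → f (a z) ≤ g (a z)) ∧ (b z ∈ S → f (b z) ≤ g (b z)))
    (hR : ∀ z ∈ R, (a z ∉ S → a z ∈ R) ∧ (b z ∉ S → b z ∈ R))
    (hsup : ∀ z ∈ R, p * g (a z) + (1 - p) * g (b z) ≤ g z) (hgR : ∀ z ∈ R, 0 ≤ g z) (N : ℕ) :
    ∀ z ∈ R, ∑ n ∈ Finset.range N, hitMean p a b f S n z ≤ g z := by
  induction N with
  | zero => simpa using hgR
  | succ N ih =>
    intro z hz
    have key : ∀ w, (w ∈ S → f w ≤ g w) → (w ∉ S → w ∈ R) →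
        S.indicator f w + ∑ n ∈ Finset.range N, Sᶜ.indicator (hitMean p a b f S n) w ≤ g w := by
      intro w h1 h2
      by_cases hw : w ∈ S
      · simpa [hw] using h1 hw
      · simpa [hw] using ih w (h2 hw)
    have ha := key (a z) (hS z hz).1 (hR z hz).1
    have hb := key (b z) (hS z hz).2 (hR z hz).2
    have e : ∑ n ∈ Finset.range (N + 1), hitMean p a b f S n z
        = p * (S.indicator f (a z)
            + ∑ n ∈ Finset.range N, Sᶜ.indicator (hitMean p a b f S n) (a z))
          + (1 - p) * (S.indicator f (b z)
            + ∑ n ∈ Finset.range N, Sᶜ.indicator (hitMean p a b f S n) (b z)) := by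
      rw [Finset.sum_range_succ']
      simp only [hitMean_succ, hitMean_zero, Finset.sum_add_distrib, ← Finset.mul_sum]
      ring
    rw [e]
    have := hsup z hz
    have := mul_le_mul_of_nonneg_left ha hp0
    have := mul_le_mul_of_nonneg_left hb (sub_nonneg.2 hp1)
    linarith

lemma summable_hitMean {E : Type*} {p : ℝ} (hp0 : 0 ≤ p) (hp1 : p ≤ 1) (a b : E → E) (S : Set E)
    {f : E → ℝ} (hf : ∀ z, 0 ≤ f z) {C : ℝ} (hC : ∀ z, f z ≤ C) (z : E) :
    Summable (fun n => hitMean p a b f S n z) := by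
  have hC0 : 0 ≤ C := (hf z).trans (hC z)
  refine summable_of_sum_range_le (c := C) (fun n => hitMean_nonneg hp0 hp1 a b S n hf z) fun N => ?_
  exact sum_hitMean_le hp0 hp1 a b S univ f (fun _ => C) (fun z _ => ⟨fun _ => hC _, fun _ => hC _⟩)
    (fun z _ => ⟨fun _ => trivial, fun _ => trivial⟩)
    (fun _ _ => by linarith) (fun _ _ => hC0) N z trivial

/-- The paths that do not visit `S` at the times `1, …, n`. -/
def avoidSet {E : Type*} (S : Set E) (n : ℕ) : Set (ℕ → E) := {ω | ∀ i, 1 ≤ i → i ≤ n → ω i ∉ S}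

lemma measurableSet_avoidSet {E : Type*} [MeasurableSpace E] {S : Set E} (hS : MeasurableSet S)
    (n : ℕ) : MeasurableSet[pathSigma E n] (avoidSet S n) := by
  have : avoidSet S n = ⋂ i ∈ {i : ℕ | 1 ≤ i ∧ i ≤ n}, {ω : ℕ → E | ω i ∈ Sᶜ} := by
    ext ω; simp [avoidSet]
  rw [this]
  refine MeasurableSet.biInter (to_countable _) fun i hi => ?_
  have hle : MeasurableSpace.comap (fun ω : ℕ → E => ω i) inferInstance ≤ pathSigma E n :=
    le_iSup₂_of_le i (Finset.mem_range.2 (Nat.lt_succ_of_le hi.2)) le_rfl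
  exact hle _ ⟨Sᶜ, hS.compl, rfl⟩

lemma pathSigma_le (E : Type*) [MeasurableSpace E] (n : ℕ) :
    pathSigma E n ≤ MeasurableSpace.pi :=
  iSup₂_le fun i _ => (measurable_pi_apply i).comap_le

/-- The Markov property, extended from indicators to nonnegative measurable functions. -/
lemma IsMarkovChainLaw.lintegral_succ {E : Type*} [MeasurableSpace E] {Pr : Kernel E (ℕ → E)}
    {Q : Kernel E E} (h : IsMarkovChainLaw Pr Q) (x : E) (n : ℕ) {B : Set (ℕ → E)}
    (hB : MeasurableSet[pathSigma E n] B) {g : E → ℝ≥0∞} (hg : Measurable g) :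
    ∫⁻ ω in B, g (ω (n + 1)) ∂(Pr x) = ∫⁻ ω in B, (∫⁻ z, g z ∂(Q (ω n))) ∂(Pr x) := by
  have hB' : MeasurableSet B := pathSigma_le E n _ hB
  have e : ((Pr x).restrict B).map (fun ω => ω (n + 1))
      = (((Pr x).restrict B).map (fun ω => ω n)).bind Q := by
    ext A hA
    rw [Measure.bind_apply hA Q.aemeasurable, Measure.map_apply (measurable_pi_apply _) hA,
      lintegral_map (Q.measurable_coe hA) (measurable_pi_apply _),
      Measure.restrict_apply ((measurable_pi_apply _) hA), ← h.markov x n B hB A hA, inter_comm]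
    rfl
  rw [← lintegral_map hg (measurable_pi_apply (n + 1)), e,
    Measure.lintegral_bind Q.aemeasurable hg.aemeasurable,
    lintegral_map hg.lintegral_kernel (measurable_pi_apply _)]

lemma IsMarkovChainLaw.ae_start {E : Type*} [MeasurableSpace E] [MeasurableSingletonClass E]
    {Pr : Kernel E (ℕ → E)} [IsMarkovKernel Pr]
    {Q : Kernel E E} (h : IsMarkovChainLaw Pr Q) (x : E) : ∀ᵐ ω ∂(Pr x), ω 0 = x := by
  have hm : MeasurableSet {ω : ℕ → E | ω 0 = x} := 
    (show Measurable fun ω : ℕ → E => ω 0 from measurable_pi_apply 0) (measurableSet_singleton x)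
  exact (prob_compl_eq_zero_iff hm).2 (h.start x)

lemma measurable_stepMean {E : Type*} [MeasurableSpace E] {p : ℝ} {a b : E → E} (ha : Measurable a)
    (hb : Measurable b) {g : E → ℝ} (hg : Measurable g) : Measurable (stepMean p a b g) :=
  ((hg.comp ha).const_mul p).add ((hg.comp hb).const_mul (1 - p))

lemma lintegral_twoPoint {E : Type*} [MeasurableSpace E] {p : ℝ} (hp0 : 0 ≤ p) (hp1 : p ≤ 1)
    (x y : E) {g : E → ℝ} (hg : Measurable g) (hg0 : ∀ z, 0 ≤ g z) :
    ∫⁻ z, ENNReal.ofReal (g z) ∂(ENNReal.ofReal p • Measure.dirac x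
      + ENNReal.ofReal (1 - p) • Measure.dirac y) = ENNReal.ofReal (p * g x + (1 - p) * g y) := by
  rw [lintegral_add_measure, lintegral_smul_measure, lintegral_smul_measure,
    lintegral_dirac' _ hg.ennreal_ofReal, lintegral_dirac' _ hg.ennreal_ofReal,
    ENNReal.ofReal_add (mul_nonneg hp0 (hg0 _)) (mul_nonneg (by linarith) (hg0 _)),
    ENNReal.ofReal_mul hp0, ENNReal.ofReal_mul (by linarith)]
  rfl

lemma lintegral_avoidSet {E : Type*} [MeasurableSpace E] [MeasurableSingletonClass E]
    {Pr : Kernel E (ℕ → E)} [IsMarkovKernel Pr] {Q : Kernel E E} (h : IsMarkovChainLaw Pr Q)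
    {p : ℝ} (hp0 : 0 ≤ p) (hp1 : p ≤ 1) {a b : E → E} (ha : Measurable a) (hb : Measurable b)
    (hQ : ∀ z, Q z = ENNReal.ofReal p • Measure.dirac (a z)
      + ENNReal.ofReal (1 - p) • Measure.dirac (b z))
    {S : Set E} (hS : MeasurableSet S) (x : E) (n : ℕ) :
    ∀ {g : E → ℝ}, Measurable g → (∀ z, 0 ≤ g z) →
    ∫⁻ ω in avoidSet S n, ENNReal.ofReal (g (ω (n + 1))) ∂(Pr x)
      = ENNReal.ofReal (avoidMean p a b S n g x) := by
  have step : ∀ (n : ℕ) {g : E → ℝ}, Measurable g → (∀ z, 0 ≤ g z) →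
      ∫⁻ ω in avoidSet S n, ENNReal.ofReal (g (ω (n + 1))) ∂(Pr x)
        = ∫⁻ ω in avoidSet S n, ENNReal.ofReal (stepMean p a b g (ω n)) ∂(Pr x) := by
    intro n g hg hg0
    rw [h.lintegral_succ x n (measurableSet_avoidSet hS n) (g := fun z => ENNReal.ofReal (g z))
      hg.ennreal_ofReal]
    refine lintegral_congr fun ω => ?_
    rw [hQ, lintegral_twoPoint hp0 hp1 _ _ hg hg0]; rfl
  induction n with
  | zero =>
    intro g hg hg0
    rw [step 0 hg hg0]
    have : avoidSet S 0 = univ := by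
      ext ω; simp only [avoidSet, mem_ofPred_eq, mem_univ, iff_true]; intro i h1 h2; omega
    rw [this, Measure.restrict_univ, avoidMean]
    have e : (fun ω : ℕ → E => ENNReal.ofReal (stepMean p a b g (ω 0)))
        =ᵐ[Pr x] fun _ => ENNReal.ofReal (stepMean p a b g x) := by
      filter_upwards [h.ae_start x] with ω hω
      rw [hω]
    rw [lintegral_congr_ae e]; simp
  | succ n ih =>
    intro g hg hg0
    rw [step _ hg hg0, avoidMean_succ', ← ih ((measurable_stepMean ha hb hg).indicator hS.compl)
      (fun z => Set.indicator_nonneg (fun z _ => stepMean_nonneg hp0 hp1 a b hg0 z) z)]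
    have hm := fun n => pathSigma_le E n _ (measurableSet_avoidSet hS n)
    rw [← lintegral_indicator (hm _), ← lintegral_indicator (hm _)]
    refine lintegral_congr fun ω => ?_
    have hiff : ω ∈ avoidSet S (n + 1) ↔ ω ∈ avoidSet S n ∧ ω (n + 1) ∉ S := by
      constructor
      · exact fun hω => ⟨fun i h1 h2 => hω i h1 (by omega), hω _ (by omega) le_rfl⟩
      · rintro ⟨h1, h2⟩ i hi hi'
        rcases Nat.lt_or_ge n i with hlt | hge
        · obtain rfl : i = n + 1 := by omega
          exact h2
        · exact h1 i hi hge
    by_cases h1 : ω ∈ avoidSet S n <;> by_cases h2 : ω (n + 1) ∈ S <;>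
      simp [Set.indicator, hiff, h1, h2]

lemma hitTime_eq {E : Type*} {S : Set E} {ω : ℕ → E} {n : ℕ} (h1 : ω ∈ avoidSet S n)
    (h2 : ω (n + 1) ∈ S) : hitTime S ω = ((n + 1 : ℕ) : ℕ∞) := by
  refine le_antisymm (sInf_le ⟨n + 1, rfl, by omega, h2⟩) (le_sInf ?_)
  rintro _ ⟨t, rfl, ht, htS⟩
  by_contra hlt
  have : t < n + 1 := by exact_mod_cast not_le.1 hlt
  exact h1 t ht (by omega) htS

lemma hitTime_eq_top {E : Type*} {S : Set E} {ω : ℕ → E} (h : ∀ n, ω (n + 1) ∉ S) :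
    hitTime S ω = ⊤ := by
  refine sInf_eq_top.2 ?_
  rintro _ ⟨t, rfl, ht, htS⟩
  obtain ⟨n, rfl⟩ : ∃ n, t = n + 1 := ⟨t - 1, by omega⟩
  exact absurd htS (h n)

/-- The stopped payoff decomposed along the value `n + 1` of the hitting time. -/
lemma ofReal_stopPayoff {E : Type*} (δ : ℕ → ℝ) (f : E → ℝ) (S : Set E) (ω : ℕ → E) :
    ENNReal.ofReal (stopPayoff δ f S ω) = ∑' n, (avoidSet S n).indicator
      (fun ω => ENNReal.ofReal (δ (n + 1) * S.indicator f (ω (n + 1)))) ω := by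
  classical
  by_cases hex : ∃ n, ω (n + 1) ∈ S
  · have hm := Nat.find_spec hex
    have hmin : ∀ k < Nat.find hex, ω (k + 1) ∉ S := fun k hk => Nat.find_min hex hk
    generalize Nat.find hex = m at hm hmin
    have hav : ω ∈ avoidSet S m := by
      intro i h1 h2
      obtain ⟨k, rfl⟩ : ∃ k, i = k + 1 := ⟨i - 1, by omega⟩
      exact hmin k (by omega)
    rw [tsum_eq_single m]
    · have hne : hitTime S ω ≠ ⊤ := by rw [hitTime_eq hav hm]; exact ENat.natCast_ne_top _
      rw [stopPayoff, if_neg hne, hitTime_eq hav hm, ENat.toNat_natCast, indicator_of_mem hav,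
        indicator_of_mem hm]
    · intro k hk
      rcases lt_or_gt_of_ne hk with hlt | hgt
      · simp [Set.indicator, hmin k hlt]
      · exact indicator_of_notMem
          (fun hc : ω ∈ avoidSet S k => hc (m + 1) (by omega) (by omega) hm) _
  · push Not at hex
    rw [stopPayoff, if_pos (hitTime_eq_top hex), ENNReal.ofReal_zero, eq_comm,
      ENNReal.tsum_eq_zero]
    intro n
    simp [Set.indicator, hex n]

/-- The objective value as a series over the possible hitting times. -/
lemma hasSum_valJ {E : Type*} [MeasurableSpace E] [MeasurableSingletonClass E]
    {Pr : Kernel E (ℕ → E)} [IsMarkovKernel Pr] {Q : Kernel E E} (h : IsMarkovChainLaw Pr Q)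
    {p : ℝ} (hp0 : 0 ≤ p) (hp1 : p ≤ 1) {a b : E → E} (ha : Measurable a) (hb : Measurable b)
    (hQ : ∀ z, Q z = ENNReal.ofReal p • Measure.dirac (a z)
      + ENNReal.ofReal (1 - p) • Measure.dirac (b z))
    {S : Set E} (hS : MeasurableSet S) {f : E → ℝ} (hf : Measurable f) (hf0 : ∀ z, 0 ≤ f z)
    {C : ℝ} (hC : ∀ z, f z ≤ C) {δ : ℕ → ℝ} (hδ0 : ∀ n, 0 ≤ δ n) (hδ1 : ∀ n, δ n ≤ 1) (x : E) :
    HasSum (fun n => δ (n + 1) * hitMean p a b f S n x) (valJ Pr δ f S x) := by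
  have hm := fun n => pathSigma_le E n _ (measurableSet_avoidSet hS n)
  have hfS : Measurable (S.indicator f) := hf.indicator hS
  have hfS0 : ∀ z, 0 ≤ S.indicator f z := fun z => Set.indicator_nonneg (fun z _ => hf0 z) z
  have hmeas : ∀ n : ℕ, Measurable ((avoidSet S n).indicator
      (fun ω : ℕ → E => ENNReal.ofReal (δ (n + 1) * S.indicator f (ω (n + 1))))) := fun n =>
    ((((hfS.comp (measurable_pi_apply (n + 1))).const_mul (δ (n + 1))).ennreal_ofReal)).indicator
      (hm n)
  have hpos : ∀ ω, 0 ≤ stopPayoff δ f S ω := by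
    intro ω
    unfold stopPayoff
    split_ifs
    · exact le_rfl
    · exact mul_nonneg (hδ0 _) (hf0 _)
  have hsm : Measurable (stopPayoff δ f S) := by
    have : stopPayoff δ f S = fun ω => (∑' n, (avoidSet S n).indicator
        (fun ω => ENNReal.ofReal (δ (n + 1) * S.indicator f (ω (n + 1)))) ω).toReal := by
      funext ω
      rw [← ofReal_stopPayoff, ENNReal.toReal_ofReal (hpos ω)]
    rw [this]
    exact (Measurable.tsum hmeas).ennreal_toReal
  have hterm0 : ∀ n, 0 ≤ δ (n + 1) * hitMean p a b f S n x := fun n =>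
    mul_nonneg (hδ0 _) (hitMean_nonneg hp0 hp1 a b S n hf0 x)
  have hsum : Summable (fun n => δ (n + 1) * hitMean p a b f S n x) := by
    refine Summable.of_nonneg_of_le hterm0 (fun n => ?_)
      (summable_hitMean hp0 hp1 a b S hf0 hC x)
    exact mul_le_of_le_one_left (hitMean_nonneg hp0 hp1 a b S n hf0 x) (hδ1 _)
  have hval : valJ Pr δ f S x = ∑' n, δ (n + 1) * hitMean p a b f S n x := by
    rw [valJ, integral_eq_lintegral_of_nonneg_ae (ae_of_all _ hpos) hsm.aestronglyMeasurable]
    simp_rw [ofReal_stopPayoff]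
    rw [lintegral_tsum (fun n => (hmeas n).aemeasurable)]
    have : ∀ n : ℕ, ∫⁻ ω, (avoidSet S n).indicator
        (fun ω => ENNReal.ofReal (δ (n + 1) * S.indicator f (ω (n + 1)))) ω ∂(Pr x)
        = ENNReal.ofReal (δ (n + 1) * hitMean p a b f S n x) := by
      intro n
      rw [lintegral_indicator (hm n)]
      simp_rw [ENNReal.ofReal_mul (hδ0 (n + 1))]
      rw [lintegral_const_mul' _ _ ENNReal.ofReal_ne_top,
        lintegral_avoidSet h hp0 hp1 ha hb hQ hS x n hfS hfS0]
      rfl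
    simp_rw [this]
    rw [← ENNReal.ofReal_tsum_of_nonneg hterm0 hsum,
      ENNReal.toReal_ofReal (tsum_nonneg hterm0)]
  rw [hval]
  exact hsum.hasSum

/-! ### First-passage probabilities of the random walk -/

/-- `levelProb p n t` is the probability that the walk started at `n ≥ 0` first reaches `0` at
time `t`. -/
def levelProb (p : ℝ) : ℕ → ℕ → ℝ
  | 0, 0 => 1
  | 0, _ + 1 => 0
  | _ + 1, 0 => 0
  | n + 1, t + 1 => p * levelProb p (n + 2) t + (1 - p) * levelProb p n t

lemma levelProb_nonneg {p : ℝ} (hp0 : 0 ≤ p) (hp1 : p ≤ 1) (t : ℕ) :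
    ∀ n, 0 ≤ levelProb p n t := by
  induction t with
  | zero => rintro (_ | n) <;> simp [levelProb]
  | succ t ih =>
    rintro (_ | n)
    · simp [levelProb]
    · rw [levelProb]
      exact add_nonneg (mul_nonneg hp0 (ih _)) (mul_nonneg (by linarith) (ih _))

lemma sum_levelProb_le {p : ℝ} (hp0 : 0 ≤ p) (hp1 : p ≤ 1) (N : ℕ) :
    ∀ n, ∑ t ∈ Finset.range N, levelProb p n t ≤ 1 := by
  induction N with
  | zero => simp
  | succ N ih =>
    rintro (_ | n)
    · rw [Finset.sum_range_succ']; simp [levelProb]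
    · rw [Finset.sum_range_succ']
      simp only [levelProb, Finset.sum_add_distrib, ← Finset.mul_sum]
      have h1 := mul_le_mul_of_nonneg_left (ih (n + 2)) hp0
      have h2 := mul_le_mul_of_nonneg_left (ih n) (sub_nonneg.2 hp1)
      linarith

/-- Strong Markov property at the first visit to level `m`: the walk moves down one unit at a
time, so from `n + m` it passes through `m` before reaching `0`. -/
lemma levelProb_add (p : ℝ) (m t : ℕ) : ∀ n, levelProb p (n + m) t
    = ∑ ij ∈ Finset.HasAntidiagonal.antidiagonal t, levelProb p n ij.1 * levelProb p m ij.2 := by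
  induction t with
  | zero =>
    rintro (_ | n)
    · simp [levelProb]
    · simp [levelProb, show n + 1 + m = (n + m) + 1 by ring]
  | succ t ih =>
    rintro (_ | n)
    · rw [Finset.Nat.antidiagonal_succ]; simp [levelProb]
    · rw [Finset.Nat.antidiagonal_succ, show n + 1 + m = (n + m) + 1 by ring, levelProb,
        show n + m + 2 = (n + 2) + m by ring, ih, ih]
      simp [levelProb, Finset.mul_sum, Finset.sum_add_distrib, add_mul, mul_assoc]

lemma disc_pos {β : ℝ} (hβ : 0 < β) (s t : ℕ) : 0 < 1 / (1 + β * ((t : ℝ) + s)) := by positivity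

lemma disc_le_one {β : ℝ} (hβ : 0 < β) (s t : ℕ) : 1 / (1 + β * ((t : ℝ) + s)) ≤ 1 := by
  rw [div_le_one (by positivity)]
  have : 0 ≤ β * ((t : ℝ) + s) := by positivity
  linarith

/-- `levelDisc p β s n` is `E^n[1 / (1 + β (ξ + s))]`, as the series over the values of `ξ`. -/
def levelDisc (p β : ℝ) (s n : ℕ) : ℝ :=
  ∑' t : ℕ, levelProb p n t * (1 / (1 + β * ((t : ℝ) + s)))

lemma summable_levelDisc {p β : ℝ} (hp0 : 0 ≤ p) (hp1 : p ≤ 1) (hβ : 0 < β) (s n : ℕ) :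
    Summable fun t : ℕ => levelProb p n t * (1 / (1 + β * ((t : ℝ) + s))) := by
  refine Summable.of_nonneg_of_le
    (fun t => mul_nonneg (levelProb_nonneg hp0 hp1 t n) (disc_pos hβ s t).le)
    (fun t => mul_le_of_le_one_right (levelProb_nonneg hp0 hp1 t n) (disc_le_one hβ s t))
    (summable_of_sum_range_le (fun t => levelProb_nonneg hp0 hp1 t n)
      (fun N => sum_levelProb_le hp0 hp1 N n))

lemma levelDisc_nonneg {p β : ℝ} (hp0 : 0 ≤ p) (hp1 : p ≤ 1) (hβ : 0 < β) (s n : ℕ) :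
    0 ≤ levelDisc p β s n :=
  tsum_nonneg fun t => mul_nonneg (levelProb_nonneg hp0 hp1 t n) (disc_pos hβ s t).le

/-- Hyperbolic discounting satisfies `δ(s + t) ≥ δ(s) δ(t)`, which makes the discounted
first-passage values supermultiplicative. -/
lemma levelDisc_mul_le {p β : ℝ} (hp0 : 0 ≤ p) (hp1 : p ≤ 1) (hβ : 0 < β) (s n m : ℕ) :
    levelDisc p β s n * levelDisc p β 0 m ≤ levelDisc p β s (n + m) := by
  have hs := summable_levelDisc hp0 hp1 hβ
  rw [levelDisc, levelDisc,
    tsum_mul_tsum_eq_tsum_sum_antidiagonal_of_summable_norm (hs s n).norm (hs 0 m).norm]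
  refine Summable.tsum_le_tsum (fun t => ?_)
    (summable_norm_sum_mul_antidiagonal_of_summable_norm (hs s n).norm (hs 0 m).norm).of_norm
    (hs s (n + m))
  rw [levelProb_add, Finset.sum_mul]
  refine Finset.sum_le_sum fun ij hij => ?_
  obtain ⟨i, j⟩ := ij
  obtain rfl : i + j = t := by simpa using hij
  have h1 : 1 / (1 + β * ((i : ℝ) + s)) * (1 / (1 + β * ((j : ℝ) + (0 : ℕ))))
      ≤ 1 / (1 + β * (((i + j : ℕ) : ℝ) + s)) := by
    rw [div_mul_div_comm, one_mul]
    refine one_div_le_one_div_of_le (by positivity) ?_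
    push_cast
    have : 0 ≤ β * ((i : ℝ) + s) * (β * j) := by positivity
    linarith
  have h2 : 0 ≤ levelProb p n i * levelProb p m j :=
    mul_nonneg (levelProb_nonneg hp0 hp1 i n) (levelProb_nonneg hp0 hp1 j m)
  calc _ = levelProb p n i * levelProb p m j
        * (1 / (1 + β * ((i : ℝ) + s)) * (1 / (1 + β * ((j : ℝ) + (0 : ℕ))))) := by ring
    _ ≤ _ := mul_le_mul_of_nonneg_left h1 h2

/-- The time-`0` term of the series vanishes for a walk started above `0`. -/
lemma levelDisc_succ {p β : ℝ} (hp0 : 0 ≤ p) (hp1 : p ≤ 1) (hβ : 0 < β) (s n : ℕ) :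
    levelDisc p β s (n + 1)
      = ∑' t : ℕ, levelProb p (n + 1) (t + 1) * (1 / (1 + β * ((t : ℝ) + (s + 1 : ℕ)))) := by
  rw [levelDisc, (summable_levelDisc hp0 hp1 hβ s (n + 1)).tsum_eq_zero_add]
  simp only [levelProb, zero_mul, zero_add]
  refine tsum_congr fun t => ?_
  push_cast
  ring_nf

/-- First-step analysis at level `1`. -/
lemma levelDisc_one {p β : ℝ} (hp0 : 0 ≤ p) (hp1 : p ≤ 1) (hβ : 0 < β) :
    levelDisc p β 0 1 = (1 - p) / (1 + β) + p * levelDisc p β 1 2 := by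
  rw [levelDisc_succ hp0 hp1 hβ]
  have hs := summable_levelDisc hp0 hp1 hβ 1
  have h0 : levelDisc p β 1 0 = 1 / (1 + β) := by
    rw [levelDisc, tsum_eq_single 0]
    · simp [levelProb]
    · rintro (_ | t) ht
      · exact absurd rfl ht
      · simp [levelProb]
  have : ∀ t : ℕ, levelProb p (0 + 1) (t + 1) * (1 / (1 + β * ((t : ℝ) + (0 + 1 : ℕ))))
      = p * (levelProb p 2 t * (1 / (1 + β * ((t : ℝ) + (1 : ℕ)))))
        + (1 - p) * (levelProb p 0 t * (1 / (1 + β * ((t : ℝ) + (1 : ℕ))))) := by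
    intro t; rw [levelProb]; ring
  simp_rw [this]
  rw [((hs 2).mul_left p).tsum_add ((hs 0).mul_left (1 - p)), tsum_mul_left, tsum_mul_left]
  change p * levelDisc p β 1 2 + (1 - p) * levelDisc p β 1 0 = _
  rw [h0]; ring

lemma levelDisc_le_one {p β : ℝ} (hp0 : 0 ≤ p) (hp1 : p ≤ 1) (hβ : 0 < β) (s n : ℕ) :
    levelDisc p β s n ≤ 1 := by
  have hq := fun t => levelProb_nonneg hp0 hp1 t n
  refine (summable_levelDisc hp0 hp1 hβ s n).tsum_le_of_sum_range_le fun N => ?_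
  exact (Finset.sum_le_sum fun t _ => mul_le_of_le_one_right (hq t) (disc_le_one hβ s t)).trans
    (sum_levelProb_le hp0 hp1 N n)

lemma levelDisc_one_pos {p β : ℝ} (hp0 : 0 ≤ p) (hp1 : p < 1) (hβ : 0 < β) :
    0 < levelDisc p β 0 1 := by
  rw [levelDisc_one hp0 hp1.le hβ]
  have : 0 < (1 - p) / (1 + β) := div_pos (by linarith) (by linarith)
  have := mul_nonneg hp0 (levelDisc_nonneg hp0 hp1.le hβ 1 2)
  linarith

lemma levelDisc_one_lt {p β : ℝ} (hp0 : 0 ≤ p) (hp1 : p < 1) (hβ : 0 < β) :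
    levelDisc p β 0 1 < 1 := by
  rw [levelDisc_one hp0 hp1.le hβ]
  have : (1 - p) / (1 + β) < 1 - p := div_lt_self (by linarith) (by linarith)
  have := mul_le_mul_of_nonneg_left (levelDisc_le_one hp0 hp1.le hβ 1 2) hp0
  linarith

/-- In a copy `c 0, c 1, …` of the half-line in which only `c 0` lies in `S`, the hitting value
from `c (m + 1)` is the payoff at `c 0` weighted by the first-passage probability. -/
lemma hitMean_level {E : Type*} {p : ℝ} {a b : E → E} {S : Set E} {f : E → ℝ} {c : ℕ → E}
    (ha : ∀ m, a (c (m + 1)) = c (m + 2)) (hb : ∀ m, b (c (m + 1)) = c m) (h0 : c 0 ∈ S)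
    (hS : ∀ m, c (m + 1) ∉ S) (t : ℕ) :
    ∀ m, hitMean p a b f S t (c (m + 1)) = f (c 0) * levelProb p (m + 1) (t + 1) := by
  induction t with
  | zero =>
    intro m
    rw [hitMean_zero, ha, hb, indicator_of_notMem (hS (m + 1))]
    rcases m with _ | m
    · simp [h0, levelProb]; ring
    · simp [hS m, levelProb]
  | succ t ih =>
    intro m
    rw [hitMean_succ, ha, hb, indicator_of_mem (show c (m + 2) ∈ Sᶜ from hS (m + 1)), ih (m + 1)]
    rcases m with _ | m
    · rw [indicator_of_notMem (by simpa using h0)]; simp [levelProb]; ring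
    · rw [indicator_of_mem (show c (m + 1) ∈ Sᶜ from hS m), ih m, levelProb.eq_4 p (m + 1) (t + 1)]
      ring

/-- The walk's discounted first-passage value from `1`, as a series. From this start
`ξ ≥ 1`, so `ξ` coincides with the hitting time `ρ(1, {0})`. -/
lemma integral_walkDisc {p β : ℝ} (hp0 : 0 ≤ p) (hp1 : p ≤ 1) (hβ : 0 < β)
    {PrY : Kernel ℤ (ℕ → ℤ)} [IsMarkovKernel PrY] {QY : Kernel ℤ ℤ}
    (hwalk : IsMarkovChainLaw PrY QY)
    (hQY : ∀ n : ℤ, QY n = ENNReal.ofReal p • Measure.dirac (n + 1)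
      + ENNReal.ofReal (1 - p) • Measure.dirac (n - 1)) (s : ℕ) :
    ∫ ω, walkDisc β s ω ∂(PrY 1) = levelDisc p β s 1 := by
  have e : walkDisc β s =ᵐ[PrY 1]
      stopPayoff (fun t : ℕ => 1 / (1 + β * ((t : ℝ) + s))) (fun _ : ℤ => (1 : ℝ)) {0} := by
    filter_upwards [hwalk.ae_start 1] with ω hω
    have hhit : walkHit ω = hitTime {0} ω := by
      unfold walkHit hitTime
      congr 1
      ext n
      refine exists_congr fun t => and_congr_right fun _ => ?_
      simp only [mem_singleton_iff]
      refine ⟨fun h => ⟨?_, h⟩, fun h => h.2⟩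
      rcases t with _ | t
      · rw [hω] at h; exact absurd h one_ne_zero
      · omega
    unfold walkDisc stopPayoff
    rw [hhit]; simp
  rw [integral_congr_ae e]
  have hs := hasSum_valJ hwalk hp0 hp1 (a := fun n => n + 1) (b := fun n => n - 1)
    (measurable_of_countable _) (measurable_of_countable _) hQY (measurableSet_singleton (0 : ℤ))
    (f := fun _ => 1) measurable_const (fun _ => zero_le_one) (C := 1) (fun _ => le_rfl)
    (fun t => (disc_pos hβ s t).le) (fun t => disc_le_one hβ s t) 1
  rw [← valJ, ← hs.tsum_eq, levelDisc_succ hp0 hp1 hβ]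
  refine tsum_congr fun t => ?_
  have := hitMean_level (p := p) (a := fun n : ℤ => n + 1) (b := fun n => n - 1) (S := {0})
    (f := fun _ => 1) (c := fun m => (m : ℤ)) (fun m => by push_cast; ring)
    (fun m => by push_cast; ring) (by simp) (fun m => by simp; omega) t 0
  simp only [zero_add, Nat.cast_one] at this
  rw [this, one_mul, mul_comm]
  push_cast
  ring_nf

/-! ### Objective values in the binomial model -/

/-- The objective value `J(x, ρ(x,S))` of the binomial model as a series. -/
def binJ (u p β K : ℝ) (S : Set ℝ) (x : ℝ) : ℝ :=
  ∑' n : ℕ, binDisc β (n + 1) * hitMean p (fun z => u * z) (fun z => z / u) (binPay K) S n x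

lemma binPay_nonneg (K x : ℝ) : 0 ≤ binPay K x := le_max_right _ _

lemma binPay_of_le {K x : ℝ} (h : x ≤ K) : binPay K x = K - x := max_eq_left (by linarith)

lemma binDisc_nonneg {β : ℝ} (hβ : 0 < β) (n : ℕ) : 0 ≤ binDisc β n := by
  unfold binDisc; positivity

lemma binDisc_le_one {β : ℝ} (hβ : 0 < β) (n : ℕ) : binDisc β n ≤ 1 := by
  simpa [binDisc] using disc_le_one hβ 0 n

lemma summable_binHit {u p K : ℝ} (hu : 1 < u) (hp0 : 0 ≤ p) (hp1 : p ≤ 1) (hK : 0 < K)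
    (S : Set ℝ) {x : ℝ} (hx : 0 < x) :
    Summable fun n => hitMean p (fun z => u * z) (fun z => z / u) (binPay K) S n x := by
  have hu0 : 0 < u := by linarith
  refine summable_of_sum_range_le (c := K)
    (fun n => hitMean_nonneg hp0 hp1 _ _ S n (binPay_nonneg K) x) fun N => ?_
  have hle : ∀ z : ℝ, 0 < z → binPay K z ≤ K := fun z hz => max_le (by linarith) hK.le
  exact sum_hitMean_le hp0 hp1 _ _ S (Ioi 0) (binPay K) (fun _ => K)
    (fun z hz => ⟨fun _ => hle _ (mul_pos hu0 hz), fun _ => hle _ (div_pos hz hu0)⟩)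
    (fun z hz => ⟨fun _ => mul_pos hu0 hz, fun _ => div_pos hz hu0⟩)
    (fun _ _ => by linarith) (fun _ _ => hK.le) N x hx

lemma summable_binJ {u p β K : ℝ} (hu : 1 < u) (hp0 : 0 ≤ p) (hp1 : p ≤ 1) (hβ : 0 < β)
    (hK : 0 < K) (S : Set ℝ) {x : ℝ} (hx : 0 < x) : Summable fun n : ℕ =>
      binDisc β (n + 1) * hitMean p (fun z => u * z) (fun z => z / u) (binPay K) S n x :=
  Summable.of_nonneg_of_le
    (fun n => mul_nonneg (binDisc_nonneg hβ _) (hitMean_nonneg hp0 hp1 _ _ S n (binPay_nonneg K) x))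
    (fun n => mul_le_of_le_one_left (hitMean_nonneg hp0 hp1 _ _ S n (binPay_nonneg K) x)
      (binDisc_le_one hβ _))
    (summable_binHit hu hp0 hp1 hK S hx)

lemma binGrid_pos {u x : ℝ} (hu : 1 < u) (hx : x ∈ binGrid u) : 0 < x := by
  obtain ⟨i, rfl⟩ := hx
  exact zpow_pos (by linarith) i

lemma measurableSet_of_subset_binGrid {u : ℝ} {S : Set ℝ} (hS : S ⊆ binGrid u) :
    MeasurableSet S := by
  have : binGrid u = range fun i : ℤ => u ^ i := by
    ext x; simp [binGrid, eq_comm]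
  exact ((this ▸ countable_range _ : (binGrid u).Countable).mono hS).measurableSet

lemma mem_interval_iff {u : ℝ} (hu : 1 < u) (i j : ℤ) :
    u ^ i ∈ Ioc 0 (u ^ j) ∩ binGrid u ↔ i ≤ j := by
  constructor
  · exact fun h => (zpow_le_zpow_iff_right₀ hu).1 h.1.2
  · exact fun h => ⟨⟨zpow_pos (by linarith) i, (zpow_le_zpow_iff_right₀ hu).2 h⟩, i, rfl⟩

/-- The payoff is bounded on the positive half-line only, while the law is indexed by all reals;
as `S` lies in the half-line, changing the payoff off it does not change `valJ`. -/
lemma valJ_eq_binJ {u p β K : ℝ} (hu : 1 < u) (hp0 : 0 ≤ p) (hp1 : p ≤ 1) (hβ : 0 < β)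
    (hK : 0 < K) {Pr : Kernel ℝ (ℕ → ℝ)} [IsMarkovKernel Pr] {Q : Kernel ℝ ℝ}
    (hchain : IsMarkovChainLaw Pr Q)
    (hQ : ∀ x : ℝ, Q x = ENNReal.ofReal p • Measure.dirac (u * x)
      + ENNReal.ofReal (1 - p) • Measure.dirac (x / u))
    {S : Set ℝ} (hS : S ⊆ binGrid u) (x : ℝ) :
    valJ Pr (binDisc β) (binPay K) S x = binJ u p β K S x := by
  have hSp : ∀ z ∈ S, 0 < z := fun z hz => binGrid_pos hu (hS hz)
  -- On `S` the payoff agrees with the globally bounded function `z ↦ binPay K (max z 0)`.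
  set g : ℝ → ℝ := fun z => binPay K (max z 0) with hg
  have hfg : ∀ z ∈ S, binPay K z = g z := fun z hz => by simp [hg, max_eq_left (hSp z hz).le]
  have h1 : valJ Pr (binDisc β) (binPay K) S x = valJ Pr (binDisc β) g S x := by
    unfold valJ
    refine integral_congr_ae (ae_of_all _ fun ω => ?_)
    show stopPayoff _ _ _ _ = stopPayoff _ _ _ _
    unfold stopPayoff
    split_ifs with h
    · rfl
    · classical
      by_cases hex : ∃ n, ω (n + 1) ∈ S
      · have hav : ω ∈ avoidSet S (Nat.find hex) := by
          intro i hi1 hi2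
          obtain ⟨k, rfl⟩ : ∃ k, i = k + 1 := ⟨i - 1, by omega⟩
          exact Nat.find_min hex (by omega)
        rw [hitTime_eq hav (Nat.find_spec hex), ENat.toNat_natCast, hfg _ (Nat.find_spec hex)]
      · push Not at hex
        exact absurd (hitTime_eq_top hex) h
  have h2 : S.indicator (binPay K) = S.indicator g := indicator_congr hfg
  have hgm : Measurable g :=
    (measurable_const.sub (measurable_id.max measurable_const)).max measurable_const
  have := hasSum_valJ hchain hp0 hp1 (a := fun z => u * z) (b := fun z => z / u)
    (measurable_const_mul u) (measurable_id.div_const u) hQ (measurableSet_of_subset_binGrid hS)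
    (f := g) hgm (fun _ => binPay_nonneg _ _)
    (C := K) (fun z => max_le (by have := le_max_right z 0; linarith) hK.le)
    (binDisc_nonneg hβ) (binDisc_le_one hβ) x
  rw [h1, ← this.tsum_eq, binJ]
  simp only [hitMean, h2]

lemma mul_zpow_grid {u : ℝ} (hu : 1 < u) (i : ℤ) : u * u ^ i = u ^ (i + 1) := by
  rw [← zpow_one_add₀ (by linarith), add_comm]

lemma zpow_div_grid {u : ℝ} (hu : 1 < u) (i : ℤ) : u ^ i / u = u ^ (i - 1) := by
  rw [div_eq_mul_inv, ← zpow_sub_one₀ (by linarith)]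

lemma hitMean_grid {u : ℝ} (p K : ℝ) (hu : 1 < u) (j : ℤ) (t m : ℕ) :
    hitMean p (fun z => u * z) (fun z => z / u) (binPay K) (Ioc 0 (u ^ j) ∩ binGrid u) t
      (u ^ (j + (m + 1 : ℕ))) = binPay K (u ^ j) * levelProb p (m + 1) (t + 1) := by
  have := hitMean_level (p := p) (a := fun z => u * z) (b := fun z => z / u)
    (S := Ioc 0 (u ^ j) ∩ binGrid u) (f := binPay K) (c := fun m : ℕ => u ^ (j + m))
    (fun m => by
      rw [mul_zpow_grid hu]; congr 1; push_cast; ring)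
    (fun m => by
      rw [zpow_div_grid hu]; congr 1; push_cast; ring)
    ((mem_interval_iff hu _ _).2 (by simp)) (fun m hm => by
      have := (mem_interval_iff hu _ _).1 hm
      push_cast at this; omega) t m
  simpa only [Nat.cast_zero, add_zero] using this

/-- Above the threshold `y = u ^ j` the chain stops at `y` itself. -/
lemma binJ_above {u p β : ℝ} (K : ℝ) (hu : 1 < u) (hp0 : 0 ≤ p) (hp1 : p ≤ 1) (hβ : 0 < β)
    (j : ℤ) (m : ℕ) :
    binJ u p β K (Ioc 0 (u ^ j) ∩ binGrid u) (u ^ (j + (m + 1 : ℕ)))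
      = levelDisc p β 0 (m + 1) * binPay K (u ^ j) := by
  rw [levelDisc_succ hp0 hp1 hβ, ← tsum_mul_right, binJ]
  refine tsum_congr fun t => ?_
  rw [hitMean_grid p K hu, binDisc]
  push_cast
  ring

/-- At the threshold the chain stops at once after a down-step, and after an up-step returns to
the threshold. -/
lemma binJ_top {u p β K : ℝ} (hu : 1 < u) (hp0 : 0 ≤ p) (hp1 : p ≤ 1) (hβ : 0 < β) (hK : 0 < K)
    (j : ℤ) : binJ u p β K (Ioc 0 (u ^ j) ∩ binGrid u) (u ^ j)
      = (1 - p) / (1 + β) * binPay K (u ^ j / u)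
        + p * levelDisc p β 1 1 * binPay K (u ^ j) := by
  have hmu : u * u ^ j ∉ Ioc 0 (u ^ j) ∩ binGrid u := by
    rw [mul_zpow_grid hu, mem_interval_iff hu]; omega
  have hmd : u ^ j / u ∈ Ioc 0 (u ^ j) ∩ binGrid u := by
    rw [zpow_div_grid hu, mem_interval_iff hu]; omega
  rw [binJ, (summable_binJ hu hp0 hp1 hβ hK _ (zpow_pos (by linarith) j)).tsum_eq_zero_add,
    hitMean_zero, indicator_of_notMem hmu, indicator_of_mem hmd, levelDisc_succ hp0 hp1 hβ]
  congr 1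
  · simp [binDisc]; ring
  · rw [mul_assoc, ← tsum_mul_right, ← tsum_mul_left]
    refine tsum_congr fun t => ?_
    rw [hitMean_succ, indicator_of_mem (mem_compl hmu), indicator_of_notMem (notMem_compl_iff.2 hmd)]
    have := hitMean_grid p K hu j t 0
    simp only [zero_add, Nat.cast_one] at this
    rw [mul_zpow_grid hu, this, binDisc]
    push_cast
    ring_nf

/-- Below the top of `S` the payoff is linear along the chain up to the hitting time, so that the
submartingale property makes waiting unprofitable there. -/
lemma binJ_below {u p β K : ℝ} (hu : 1 < u) (hp0 : 0 ≤ p) (hp1 : p ≤ 1)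
    (hpu : 1 ≤ p * (u + 1)) (hβ : 0 < β) {S : Set ℝ} {i j : ℤ}
    (hj : u ^ j ∈ S) (hjK : u ^ j ≤ K) (hij : i < j) :
    binJ u p β K S (u ^ i) ≤ binPay K (u ^ i) := by
  have hu0 : 0 < u := by linarith
  have hK : 0 < K := (zpow_pos hu0 j).trans_le hjK
  have hx := zpow_pos hu0 i
  have hsum := summable_binHit hu hp0 hp1 hK S hx
  have hle : ∀ k ≤ j, u ^ k ≤ K := fun k hk => ((zpow_le_zpow_iff_right₀ hu).2 hk).trans hjK
  refine ((summable_binJ hu hp0 hp1 hβ hK S hx).tsum_le_tsum (fun n => mul_le_of_le_one_left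
    (hitMean_nonneg hp0 hp1 _ _ S n (binPay_nonneg K) _) (binDisc_le_one hβ _)) hsum).trans ?_
  refine hsum.tsum_le_of_sum_range_le fun N => ?_
  refine sum_hitMean_le hp0 hp1 _ _ S {z | ∃ k < j, z = u ^ k} (binPay K) (binPay K)
    (fun _ _ => ⟨fun _ => le_rfl, fun _ => le_rfl⟩) ?_ ?_ (fun _ _ => binPay_nonneg _ _) N _
    ⟨i, hij, rfl⟩
  · rintro _ ⟨k, hk, rfl⟩
    simp only [mul_zpow_grid hu, zpow_div_grid hu]
    refine ⟨fun h => ⟨k + 1, ?_, rfl⟩, fun _ => ⟨k - 1, by omega, rfl⟩⟩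
    rcases (show k + 1 ≤ j by omega).lt_or_eq with h' | h'
    · exact h'
    · exact absurd (h' ▸ hj) h
  · rintro _ ⟨k, hk, rfl⟩
    have h1 := hle (k + 1) (by omega)
    have h2 := hle (k - 1) (by omega)
    rw [← mul_zpow_grid hu] at h1
    rw [← zpow_div_grid hu] at h2
    rw [binPay_of_le h1, binPay_of_le h2, binPay_of_le (hle k hk.le)]
    have hk0 := zpow_pos hu0 k
    generalize u ^ k = z at *
    have e : p * (u * z) + (1 - p) * (z / u) - z = z * ((u - 1) / u) * (p * (u + 1) - 1) := by
      field_simp; ring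
    have : 0 ≤ z * ((u - 1) / u) * (p * (u + 1) - 1) :=
      mul_nonneg (mul_nonneg hk0.le (div_nonneg (by linarith) hu0.le)) (by linarith)
    linarith

/-- From `m + 1` levels above the next point of `S` the chain may step straight down to it. -/
lemma hitMean_down_pos {u p K : ℝ} (hu : 1 < u) (hp0 : 0 ≤ p) (hp1 : p < 1)
    {S : Set ℝ} {j : ℤ} (hj : u ^ j ∈ S) (hjK : u ^ j < K) (m : ℕ) :
    (∀ i : ℤ, j < i → i < j + (m + 1 : ℕ) → u ^ i ∉ S) →
    0 < hitMean p (fun z => u * z) (fun z => z / u) (binPay K) S m (u ^ (j + (m + 1 : ℕ))) := by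
  have h1p : 0 < 1 - p := by linarith
  induction m with
  | zero =>
    intro _
    rw [hitMean_zero]
    refine add_pos_of_nonneg_of_pos (mul_nonneg hp0
      (indicator_nonneg (fun z _ => binPay_nonneg K z) _)) (mul_pos h1p ?_)
    rw [zpow_div_grid hu, show j + ((0 + 1 : ℕ) : ℤ) - 1 = j by push_cast; ring, indicator_of_mem hj,
      binPay_of_le hjK.le]
    linarith
  | succ m ih =>
    intro h
    rw [hitMean_succ]
    refine add_pos_of_nonneg_of_pos (mul_nonneg hp0 (indicator_nonneg (fun z _ =>
      hitMean_nonneg hp0 hp1.le _ _ S m (binPay_nonneg K) z) _)) (mul_pos h1p ?_)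
    rw [zpow_div_grid hu, show j + ((m + 1 + 1 : ℕ) : ℤ) - 1 = j + (m + 1 : ℕ) by push_cast; ring,
      indicator_of_mem (mem_compl (h _ (by push_cast; omega) (by push_cast; omega)))]
    exact ih fun i h1 h2 => h i h1 (by push_cast at h2 ⊢; omega)

/-! ### Equilibria -/

/-- The equilibrium condition `Θ(S) = S`, tested at the grid points `u ^ i` and with the objective
value written as a series. -/
def IsBinEq (u p β K : ℝ) (S : Set ℝ) : Prop :=
  ∀ i : ℤ, u ^ i ∈ S ↔ binJ u p β K S (u ^ i) ≤ binPay K (u ^ i)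

lemma exists_zpow_gt {u : ℝ} (hu : 1 < u) (x : ℝ) : ∃ N : ℤ, x < u ^ N := by
  obtain ⟨n, hn⟩ := pow_unbounded_of_one_lt x hu
  exact ⟨n, by simpa using hn⟩

lemma exists_zpow_le {u : ℝ} (hu : 1 < u) {x : ℝ} (hx : 0 < x) : ∃ N : ℤ, u ^ N < x := by
  obtain ⟨N, hN⟩ := exists_zpow_gt hu x⁻¹
  refine ⟨-N, ?_⟩
  rw [zpow_neg]
  exact inv_lt_of_inv_lt₀ hx hN

/-- An equilibrium is an initial segment of the grid ending below `K`. -/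
lemma IsBinEq.exists_eq {u p β K : ℝ} (hu : 1 < u) (hp0 : 0 ≤ p) (hp1 : p < 1)
    (hpu : 1 ≤ p * (u + 1)) (hβ : 0 < β) (hK : 0 < K) {S : Set ℝ} (hS : S ⊆ binGrid u)
    (h : IsBinEq u p β K S) : ∃ j : ℤ, u ^ j < K ∧ S = Ioc 0 (u ^ j) ∩ binGrid u := by
  have hmono : ∀ {i j : ℤ}, u ^ i < u ^ j ↔ i < j := fun {i j} => zpow_lt_zpow_iff_right₀ hu
  obtain ⟨N, hN⟩ := exists_zpow_gt hu K
  obtain ⟨M, hM⟩ := exists_zpow_le hu hK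
  -- If `S` missed `(0, K)`, no positive payoff could be collected, and `u ^ M < K` would be in `S`.
  have hne : ∃ i : ℤ, u ^ i ∈ S ∧ u ^ i < K := by
    by_contra! hc
    have hz : S.indicator (binPay K) = 0 := by
      funext z
      by_cases hz : z ∈ S
      · obtain ⟨i, rfl⟩ := hS hz
        rw [indicator_of_mem hz]
        exact max_eq_right (by linarith [hc i hz])
      · rw [indicator_of_notMem hz]; rfl
    have h0 : ∀ n z, hitMean p (fun z => u * z) (fun z => z / u) (binPay K) S n z = 0 := by
      intro n
      induction n with
      | zero => intro z; rw [hitMean_zero, hz]; simp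
      | succ n ih => intro z; rw [hitMean_succ]; simp [Set.indicator, ih]
    have : u ^ M ∈ S := (h M).2 (by
      simp only [binJ, h0, mul_zero, tsum_zero]; exact binPay_nonneg _ _)
    linarith [hc M this]
  obtain ⟨j, ⟨hjS, hjK⟩, hjmax⟩ := Int.exists_greatest_of_bdd
    (P := fun i : ℤ => u ^ i ∈ S ∧ u ^ i < K) ⟨N, fun i hi => (hmono.1 (hi.2.trans hN)).le⟩ hne
  -- At the least point of `S` above `j`, the payoff would vanish but the objective value would not.
  have htop : ∀ i : ℤ, u ^ i ∈ S → i ≤ j := by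
    by_contra! hc
    obtain ⟨k, ⟨hkS, hjk⟩, hkmin⟩ := Int.exists_least_of_bdd
      (P := fun i : ℤ => u ^ i ∈ S ∧ j < i) ⟨j, fun i hi => hi.2.le⟩ hc
    have hkK : K ≤ u ^ k := by
      by_contra! hlt
      exact absurd (hjmax k ⟨hkS, hlt⟩) (by omega)
    obtain ⟨m, rfl⟩ : ∃ m : ℕ, k = j + (m + 1 : ℕ) := ⟨(k - j - 1).toNat, by omega⟩
    have hpos := hitMean_down_pos hu hp0 hp1 hjS hjK m fun i h1 h2 hi => by
      exact absurd (hkmin i ⟨hi, h1⟩) (by omega)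
    have hx := zpow_pos (show (0:ℝ) < u by linarith) (j + ((m + 1 : ℕ) : ℤ))
    have hlow := (summable_binJ hu hp0 hp1.le hβ hK S hx).le_tsum m fun n _ =>
      mul_nonneg (binDisc_nonneg hβ _) (hitMean_nonneg hp0 hp1.le _ _ S n (binPay_nonneg K) _)
    have hup := (h _).1 hkS
    rw [binPay, max_eq_right (by linarith)] at hup
    have hd : 0 < binDisc β (m + 1) := by unfold binDisc; positivity
    have := mul_pos hd hpos
    unfold binJ at hup
    linarith
  refine ⟨j, hjK, Subset.antisymm ?_ ?_⟩
  · intro z hz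
    obtain ⟨i, rfl⟩ := hS hz
    exact (mem_interval_iff hu i j).2 (htop i hz)
  · rintro z ⟨hz, i, rfl⟩
    rcases ((zpow_le_zpow_iff_right₀ hu).1 hz.2).lt_or_eq with hlt | rfl
    · exact (h i).2 (binJ_below hu hp0 hp1.le hpu hβ hjS hjK.le hlt)
    · exact hjS

/-- With `a = α₁`, `y > L K` says that continuing at `u y` beats the linear payoff `K - u y`. -/
lemma lower_lt_iff {u a K y : ℝ} (ha : a < u) :
    (1 - a) / (u - a) * K < y ↔ K - u * y < a * (K - y) := by
  rw [div_mul_eq_mul_div, div_lt_iff₀ (by linarith)]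
  constructor <;> intro h <;> linarith

/-- If continuing is profitable one step above `y`, it is so at all higher levels, even with the
smaller discount weights `a ^ n`. -/
lemma lt_levels {u a K y : ℝ} (hu : 1 < u) (ha0 : 0 ≤ a) (ha1 : a ≤ 1) (hy : 0 ≤ y) (hyK : y ≤ K)
    (h : K - u * y < a * (K - y)) (m : ℕ) : K - u ^ (m + 1) * y < a ^ (m + 1) * (K - y) := by
  induction m with
  | zero => simpa using h
  | succ m ih =>
    have h1 : (u - 1) * y ≤ u ^ (m + 1) * ((u - 1) * y) :=
      le_mul_of_one_le_left (mul_nonneg (by linarith) hy) (one_le_pow₀ hu.le)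
    have h2 : a ^ (m + 1) * ((1 - a) * (K - y)) ≤ (1 - a) * (K - y) :=
      mul_le_of_le_one_left (mul_nonneg (by linarith) (by linarith)) (pow_le_one₀ ha0 ha1)
    rw [pow_succ u, pow_succ a]
    linarith

lemma pow_le_levelDisc {p β : ℝ} (hp0 : 0 ≤ p) (hp1 : p ≤ 1) (hβ : 0 < β) (m : ℕ) :
    levelDisc p β 0 1 ^ (m + 1) ≤ levelDisc p β 0 (m + 1) := by
  induction m with
  | zero => simp
  | succ m ih =>
    rw [pow_succ]
    exact (mul_le_mul_of_nonneg_right ih (levelDisc_nonneg hp0 hp1 hβ 0 1)).trans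
      (levelDisc_mul_le hp0 hp1 hβ 0 (m + 1) 1)

/-- With `A = (1-p)/(1+β)` and `B = p α'`, `y ≤ U K` is the inequality `J(y, (0,y]) ≤ K - y`. -/
lemma le_upper_iff {u A B K y : ℝ} (hu : 1 < u) (hA : 0 < A) (hAB : A + B < 1) :
    y ≤ (1 - A - B) / (1 - A / u - B) * K ↔ A * (K - y / u) + B * (K - y) ≤ K - y := by
  have hAu : A / u < A := div_lt_self hA hu
  rw [div_mul_eq_mul_div, le_div_iff₀ (by linarith)]
  have e : A * (K - y / u) = A * K - A / u * y := by ring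
  rw [e]
  constructor <;> intro h <;> linarith

lemma upper_lt {u A B K y : ℝ} (hu : 1 < u) (hA : 0 < A) (hAB : A + B < 1) (hK : 0 < K)
    (h : y ≤ (1 - A - B) / (1 - A / u - B) * K) : y < K := by
  have hAu : A / u < A := div_lt_self hA hu
  refine h.trans_lt (mul_lt_of_lt_one_left hK ?_)
  rw [div_lt_one (by linarith)]
  linarith

/-- The bound `L`, with `α₁` written as a series. -/
def lowerBd (u p β : ℝ) : ℝ := (1 - levelDisc p β 0 1) / (u - levelDisc p β 0 1)

/-- The bound `U`, with `α'` written as a series. -/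
def upperBd (u p β : ℝ) : ℝ :=
  (1 - (1 - p) / (1 + β) - p * levelDisc p β 1 1) /
    (1 - (1 - p) / (1 + β) / u - p * levelDisc p β 1 1)

lemma weights_lt_one {p β : ℝ} (hp0 : 0 ≤ p) (hp1 : p < 1) (hβ : 0 < β) :
    (1 - p) / (1 + β) + p * levelDisc p β 1 1 < 1 := by
  have : (1 - p) / (1 + β) < 1 - p := div_lt_self (by linarith) (by linarith)
  have := mul_le_mul_of_nonneg_left (levelDisc_le_one hp0 hp1.le hβ 1 1) hp0
  linarith

/-- The three regimes: below the threshold stopping is always at least as good as continuing, at the threshold it is so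
iff `y ≤ U K`, and above it continuing is strictly better iff `y > L K`. -/
lemma isBinEq_iff {u p β K : ℝ} (hu : 1 < u) (hp0 : 0 ≤ p) (hp1 : p < 1)
    (hpu : 1 ≤ p * (u + 1)) (hβ : 0 < β) (hK : 0 < K) {j : ℤ} (hjK : u ^ j < K) :
    IsBinEq u p β K (Ioc 0 (u ^ j) ∩ binGrid u) ↔
      lowerBd u p β * K < u ^ j ∧ u ^ j ≤ upperBd u p β * K := by
  have hA : 0 < (1 - p) / (1 + β) := div_pos (by linarith) (by linarith)
  have ha0 := levelDisc_one_pos hp0 hp1 hβ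
  have ha1 := levelDisc_one_lt hp0 hp1 hβ
  have hy0 := zpow_pos (show (0:ℝ) < u by linarith) j
  have hyu : u ^ j / u ≤ K := (div_le_self hy0.le hu.le).trans hjK.le
  rw [lowerBd, upperBd, lower_lt_iff (by linarith), le_upper_iff hu hA (weights_lt_one hp0 hp1 hβ)]
  have htop := binJ_top hu hp0 hp1.le hβ hK j
  rw [binPay_of_le hyu, binPay_of_le hjK.le] at htop
  constructor
  · intro h
    constructor
    · have h1 := (not_congr (h (j + (0 + 1 : ℕ)))).1
        (by rw [mem_interval_iff hu]; push_cast; omega)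
      rw [binJ_above K hu hp0 hp1.le hβ, not_le, binPay_of_le hjK.le] at h1
      have h2 : K - u ^ (j + ((0 + 1 : ℕ) : ℤ)) ≤ binPay K (u ^ (j + ((0 + 1 : ℕ) : ℤ))) :=
        le_max_left _ _
      have h3 : u ^ (j + ((0 + 1 : ℕ) : ℤ)) = u * u ^ j := by rw [mul_zpow_grid hu]; simp
      rw [h3] at h1 h2
      exact h2.trans_lt h1
    · have h1 := (h j).1 ((mem_interval_iff hu _ _).2 le_rfl)
      rwa [htop, binPay_of_le hjK.le] at h1
  · rintro ⟨hL, hU⟩ i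
    rw [mem_interval_iff hu]
    rcases lt_trichotomy i j with hij | rfl | hij
    · exact iff_of_true hij.le (binJ_below hu hp0 hp1.le hpu hβ
        ((mem_interval_iff hu _ _).2 le_rfl) hjK.le hij)
    · exact iff_of_true le_rfl (by rw [htop, binPay_of_le hjK.le]; exact hU)
    · refine iff_of_false (by omega) ?_
      obtain ⟨m, rfl⟩ : ∃ m : ℕ, i = j + (m + 1 : ℕ) := ⟨(i - j - 1).toNat, by omega⟩
      have e : u ^ (j + ((m + 1 : ℕ) : ℤ)) = u ^ (m + 1) * u ^ j := by
        rw [zpow_add₀ (by linarith), zpow_natCast, mul_comm]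
      have hle := mul_le_mul_of_nonneg_right (pow_le_levelDisc hp0 hp1.le hβ m)
        (sub_nonneg.2 hjK.le)
      rw [binJ_above K hu hp0 hp1.le hβ, not_le, binPay_of_le hjK.le]
      refine lt_of_lt_of_le (max_lt ?_ (mul_pos (pow_pos ha0 (m + 1)) (sub_pos.2 hjK))) hle
      rw [e]
      exact lt_levels hu ha0.le ha1.le hy0.le hjK.le hL m

/-- If `y / u ≤ L K` then `y ≤ U K`, so the least grid point above `L K` is at most `U K`: since `α₁ ≥ (1-p)/(1+β) + p α' α₁`,
one has `u L ≤ U`. -/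
lemma mul_lower_le_upper {u p β K y : ℝ} (hu : 1 < u) (hp0 : 0 ≤ p) (hp1 : p < 1)
    (hβ : 0 < β) (hK : 0 < K) (h : y / u ≤ lowerBd u p β * K) : y ≤ upperBd u p β * K := by
  have hA : 0 < (1 - p) / (1 + β) := div_pos (by linarith) (by linarith)
  have ha1 := levelDisc_one_lt hp0 hp1 hβ
  have hAB := weights_lt_one hp0 hp1 hβ
  have h1 := levelDisc_one hp0 hp1.le hβ
  have h2 := mul_le_mul_of_nonneg_left (levelDisc_mul_le hp0 hp1.le hβ 1 1 1) hp0
  rw [upperBd, le_upper_iff hu hA hAB]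
  have hL1 : lowerBd u p β < 1 := by
    rw [lowerBd, div_lt_one (by linarith)]; linarith
  have hzK : y / u ≤ K := h.trans (mul_le_of_le_one_left hK.le hL1.le)
  have h3 := not_lt.1 ((not_congr (lower_lt_iff (K := K) (y := y / u)
    (show levelDisc p β 0 1 < u by linarith))).1 (not_lt.2 h))
  rw [mul_div_cancel₀ _ (by linarith : u ≠ 0)] at h3
  have h4 : (1 - p) / (1 + β) ≤ levelDisc p β 0 1 * (1 - p * levelDisc p β 1 1) := by linarith
  have h5 := mul_le_mul_of_nonneg_right h4 (sub_nonneg.2 hzK)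
  have h6 := mul_le_mul_of_nonneg_right h3 (show 0 ≤ 1 - p * levelDisc p β 1 1 by linarith)
  linarith

lemma exists_binYstar {u p β K : ℝ} (hu : 1 < u) (hp0 : 0 ≤ p) (hp1 : p < 1)
    (hβ : 0 < β) (hK : 0 < K) : ∃ j : ℤ, IsLeast {z | z ∈ binGrid u ∧ lowerBd u p β * K < z} (u ^ j)
      ∧ u ^ j ≤ upperBd u p β * K := by
  have ha1 := levelDisc_one_lt hp0 hp1 hβ
  have hL : 0 < lowerBd u p β * K := mul_pos (div_pos (by linarith) (by linarith)) hK
  obtain ⟨N, hN⟩ := exists_zpow_gt hu (lowerBd u p β * K)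
  obtain ⟨M, hM⟩ := exists_zpow_le hu hL
  obtain ⟨j, hj, hjmin⟩ := Int.exists_least_of_bdd (P := fun i : ℤ => lowerBd u p β * K < u ^ i)
    ⟨M, fun i hi => ((zpow_lt_zpow_iff_right₀ hu).1 (hM.trans hi)).le⟩ ⟨N, hN⟩
  refine ⟨j, ⟨⟨⟨j, rfl⟩, hj⟩, ?_⟩, mul_lower_le_upper hu hp0 hp1 hβ hK ?_⟩
  · rintro _ ⟨⟨i, rfl⟩, hi⟩
    exact (zpow_le_zpow_iff_right₀ hu).2 (hjmin i hi)
  · rw [zpow_div_grid hu]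
    by_contra! hc
    have := hjmin _ hc
    omega

/-- A smaller interval equilibrium is better. Above both thresholds the chain reaches `u ^ j`
before `u ^ k`; by supermultiplicativity going on to `u ^ k` is worth at least the discounted value
of continuing at `u ^ j`, which beats stopping there as `u ^ j` is outside the smaller set. -/
lemma value_mono {u p β K : ℝ} (hu : 1 < u) (hp0 : 0 ≤ p) (hp1 : p < 1) (hβ : 0 < β)
    {j k : ℤ} (hkj : k ≤ j) (hk : IsBinEq u p β K (Ioc 0 (u ^ k) ∩ binGrid u))
    (hj : IsBinEq u p β K (Ioc 0 (u ^ j) ∩ binGrid u)) (i : ℤ) :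
    max (binPay K (u ^ i)) (binJ u p β K (Ioc 0 (u ^ j) ∩ binGrid u) (u ^ i))
      ≤ max (binPay K (u ^ i)) (binJ u p β K (Ioc 0 (u ^ k) ∩ binGrid u) (u ^ i)) := by
  refine max_le (le_max_left _ _) ?_
  rcases le_or_gt i j with hij | hij
  · exact ((hj i).1 ((mem_interval_iff hu _ _).2 hij)).trans (le_max_left _ _)
  rcases hkj.eq_or_lt with rfl | hkj
  · exact le_max_right _ _
  refine le_trans ?_ (le_max_right _ _)
  obtain ⟨n, rfl⟩ : ∃ n : ℕ, i = j + (n + 1 : ℕ) := ⟨(i - j - 1).toNat, by omega⟩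
  obtain ⟨m, rfl⟩ : ∃ m : ℕ, j = k + (m + 1 : ℕ) := ⟨(j - k - 1).toNat, by omega⟩
  have h1 : binPay K (u ^ (k + ((m + 1 : ℕ) : ℤ))) ≤ levelDisc p β 0 (m + 1) * binPay K (u ^ k) := by
    rw [← binJ_above K hu hp0 hp1.le hβ]
    refine (not_le.1 ((not_congr (hk _)).1 ?_)).le
    rw [mem_interval_iff hu]; omega
  rw [binJ_above K hu hp0 hp1.le hβ, show k + ((m + 1 : ℕ) : ℤ) + ((n + 1 : ℕ) : ℤ)
    = k + ((n + 1 + m + 1 : ℕ) : ℤ) by push_cast; ring, binJ_above K hu hp0 hp1.le hβ]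
  calc _ ≤ levelDisc p β 0 (n + 1) * (levelDisc p β 0 (m + 1) * binPay K (u ^ k)) :=
        mul_le_mul_of_nonneg_left h1 (levelDisc_nonneg hp0 hp1.le hβ _ _)
    _ = levelDisc p β 0 (n + 1) * levelDisc p β 0 (m + 1) * binPay K (u ^ k) := by ring
    _ ≤ _ := mul_le_mul_of_nonneg_right (levelDisc_mul_le hp0 hp1.le hβ 0 (n + 1) (m + 1))
        (binPay_nonneg _ _)

/-- In the binomial model, a set `S ⊆ 𝕏` is an equilibrium iff `S = (0,y] ∩ 𝕏` for some
`y ∈ (L·K, U·K] ∩ 𝕏`; consequently `S* = (0, y*] ∩ 𝕏`, with `y* = min {z ∈ 𝕏 : z > L·K}`,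
is the optimal equilibrium. -/
theorem binomial_optimal_equilibrium
    (u p β K : ℝ) (hu : 1 < u) (hp_lb : 1 / (u + 1) ≤ p) (hp_ub : p < 1)
    (hβ : 0 < β) (hK : 0 < K)
    (Pr : Kernel ℝ (ℕ → ℝ)) [IsMarkovKernel Pr] (Q : Kernel ℝ ℝ) [IsMarkovKernel Q]
    (hchain : IsMarkovChainLaw Pr Q)
    (hQ : ∀ x : ℝ, Q x = ENNReal.ofReal p • Measure.dirac (u * x)
      + ENNReal.ofReal (1 - p) • Measure.dirac (x / u))
    (PrY : Kernel ℤ (ℕ → ℤ)) [IsMarkovKernel PrY] (QY : Kernel ℤ ℤ) [IsMarkovKernel QY]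
    (hwalk : IsMarkovChainLaw PrY QY)
    (hQY : ∀ n : ℤ, QY n = ENNReal.ofReal p • Measure.dirac (n + 1)
      + ENNReal.ofReal (1 - p) • Measure.dirac (n - 1))
 :
    (∀ S : Set ℝ, S ⊆ binGrid u →
      (ΘBin Pr u β K S = S ↔
        ∃ y ∈ binGrid u, binL PrY u β * K < y ∧ y ≤ binU PrY u p β * K ∧
          S = Set.Ioc 0 y ∩ binGrid u)) ∧
    ΘBin Pr u β K (Set.Ioc 0 (binYstar PrY u β K) ∩ binGrid u)
      = Set.Ioc 0 (binYstar PrY u β K) ∩ binGrid u ∧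
    ∀ S : Set ℝ, S ⊆ binGrid u → ΘBin Pr u β K S = S → ∀ x ∈ binGrid u,
      valV Pr (binDisc β) (binPay K) S x ≤
        valV Pr (binDisc β) (binPay K) (Set.Ioc 0 (binYstar PrY u β K) ∩ binGrid u) x := by
  have hp0 : 0 ≤ p := le_trans (by positivity) hp_lb
  have hpu : 1 ≤ p * (u + 1) := (div_le_iff₀ (by linarith)).1 hp_lb
  have hα : alphaWalk PrY β 1 = levelDisc p β 0 1 :=
    integral_walkDisc hp0 hp_ub.le hβ hwalk hQY 0
  have hα' : alphaWalk' PrY β = levelDisc p β 1 1 :=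
    integral_walkDisc hp0 hp_ub.le hβ hwalk hQY 1
  have hL : binL PrY u β = lowerBd u p β := by rw [binL, hα, lowerBd]
  have hU : binU PrY u p β = upperBd u p β := by
    rw [binU, hα', upperBd, div_div, mul_comm (1 + β) u]
  have hval : ∀ {S : Set ℝ}, S ⊆ binGrid u → ∀ x,
      valJ Pr (binDisc β) (binPay K) S x = binJ u p β K S x := fun hS x =>
    valJ_eq_binJ hu hp0 hp_ub.le hβ hK hchain hQ hS x
  have heq : ∀ {S : Set ℝ}, S ⊆ binGrid u → (ΘBin Pr u β K S = S ↔ IsBinEq u p β K S) := by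
    intro S hS
    constructor
    · intro h i
      constructor
      · intro hi
        rw [← h] at hi
        rw [← hval hS]
        exact hi.2
      · intro hi
        rw [← h]
        exact ⟨⟨i, rfl⟩, by rw [hval hS]; exact hi⟩
    · intro h
      ext x
      constructor
      · rintro ⟨⟨i, rfl⟩, hx⟩
        rw [hval hS] at hx
        exact (h i).2 hx
      · intro hx
        obtain ⟨i, rfl⟩ := hS hx
        exact ⟨⟨i, rfl⟩, by rw [hval hS]; exact (h i).1 hx⟩
  have hA : 0 < (1 - p) / (1 + β) := div_pos (by linarith) (by linarith)
  have hUK : ∀ {y : ℝ}, y ≤ upperBd u p β * K → y < K := fun h =>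
    upper_lt hu hA (weights_lt_one hp0 hp_ub hβ) hK h
  have hchar : ∀ {S : Set ℝ}, S ⊆ binGrid u → IsBinEq u p β K S →
      ∃ j : ℤ, S = Ioc 0 (u ^ j) ∩ binGrid u ∧
        lowerBd u p β * K < u ^ j ∧ u ^ j ≤ upperBd u p β * K := by
    intro S hS h
    obtain ⟨j, hjK, rfl⟩ := h.exists_eq hu hp0 hp_ub hpu hβ hK hS
    exact ⟨j, rfl, (isBinEq_iff hu hp0 hp_ub hpu hβ hK hjK).1 h⟩
  obtain ⟨k, hkL, hkU⟩ := exists_binYstar hu hp0 hp_ub hβ hK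
  have hstar : binYstar PrY u β K = u ^ k := by rw [binYstar, hL]; exact hkL.csInf_eq
  have hkeq := (isBinEq_iff hu hp0 hp_ub hpu hβ hK (hUK hkU)).2 ⟨hkL.1.2, hkU⟩
  rw [hL, hU, hstar]
  refine ⟨fun S hS => ⟨fun h => ?_, ?_⟩, (heq inter_subset_right).2 hkeq, ?_⟩
  · obtain ⟨j, hSj, h1, h2⟩ := hchar hS ((heq hS).1 h)
    exact ⟨u ^ j, ⟨j, rfl⟩, h1, h2, hSj⟩
  · rintro ⟨_, ⟨j, rfl⟩, h1, h2, rfl⟩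
    exact (heq hS).2 ((isBinEq_iff hu hp0 hp_ub hpu hβ hK (hUK h2)).2 ⟨h1, h2⟩)
  · rintro S hS h _ ⟨i, rfl⟩
    have hSeq := (heq hS).1 h
    obtain ⟨j, rfl, h1, h2⟩ := hchar hS hSeq
    rw [valV, valV, hval hS, hval inter_subset_right]
    exact value_mono hu hp0 hp_ub hβ
      ((zpow_le_zpow_iff_right₀ hu).1 (hkL.2 ⟨⟨j, rfl⟩, h1⟩)) hkeq hSeq i

end
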